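/- arXiv:1309.3796 — 2 statements merged into one kernel-verified Lean document; each statement's English description precedes it below -/
import Mathlib

section
/- Let q ≥ m ≥ 0 be integers, k a field, Λ = k[x_1,…,x_m]^{S_m} the ring of symmetric polynomials, and I ⊆ Λ the ideal generated by all complete homogeneous symmetric polynomials h_j with j > q − m. Then Λ/I is a finite-dimensional k-vector space of dimension equal to the binomial coefficient C(q, m). -/
/-!
STATEMENT 11: For integers `q ≥ m ≥ 0` and a field `k`, let `Λ = k[x₁,…,x_m]^{S_m}` be the
ring of symmetric polynomials and `I ⊆ Λ` the ideal generated by the complete homogeneous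
symmetric polynomials `h_j` for `j > q − m`.  Then `Λ/I` is a finite-dimensional `k`-vector
space of dimension `C(q, m)`.
-/

open MvPolynomial

/-- The ideal of the ring of symmetric polynomials generated by the complete homogeneous
symmetric polynomials `h_j` with `j > q - m`. -/
noncomputable def hsymmIdeal (k : Type*) [Field k] (m q : ℕ) :
    Ideal (symmetricSubalgebra (Fin m) k) :=
  Ideal.span {p : symmetricSubalgebra (Fin m) k |
    ∃ j : ℕ, q - m < j ∧ (p : MvPolynomial (Fin m) k) = hsymm (Fin m) k j}

universe u

namespace Polynomial

/-- `p` is monic of formal degree `n`; over the zero ring every polynomial qualifies. -/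
structure HasMonicDegree {R : Type*} [CommRing R] (p : R[X]) (n : ℕ) : Prop where
  natDegree_le : p.natDegree ≤ n
  coeff_eq_one : p.coeff n = 1

namespace HasMonicDegree

variable {R S : Type*} [CommRing R] [CommRing S] {p p' : R[X]} {n m : ℕ}

lemma monic (h : p.HasMonicDegree n) : p.Monic :=
  monic_of_natDegree_le_of_coeff_eq_one n h.1 h.2

lemma natDegree_eq [Nontrivial R] (h : p.HasMonicDegree n) : p.natDegree = n :=
  le_antisymm h.1 (le_natDegree_of_ne_zero (by simp [h.2]))

lemma of_monic (h : p.Monic) (hn : p.natDegree = n) : p.HasMonicDegree n :=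
  ⟨hn.le, hn ▸ h⟩

lemma of_subsingleton [Subsingleton R] : p.HasMonicDegree n :=
  ⟨by simp [Subsingleton.elim p 0], Subsingleton.elim _ _⟩

lemma map (h : p.HasMonicDegree n) (φ : R →+* S) : (p.map φ).HasMonicDegree n :=
  ⟨natDegree_map_le.trans h.1, by simp [h.2]⟩

lemma X_sub_C (a : R) : (X - C a).HasMonicDegree 1 :=
  ⟨natDegree_X_sub_C_le a, by simp [coeff_X]⟩

lemma mul (h : p.HasMonicDegree n) (h' : p'.HasMonicDegree m) :
    (p * p').HasMonicDegree (n + m) :=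
  ⟨natDegree_mul_le_of_le h.1 h'.1,
    by rw [coeff_mul_add_eq_of_natDegree_le h.1 h'.1, h.2, h'.2, one_mul]⟩

lemma of_mul_left (h : p.HasMonicDegree n) (h' : (p * p').HasMonicDegree (n + m)) :
    p'.HasMonicDegree m := by
  nontriviality R using of_subsingleton
  have hp' : p'.Monic := .of_mul_monic_left h.monic h'.monic
  refine of_monic hp' ?_
  have := h.monic.natDegree_mul hp'
  rw [h'.natDegree_eq, h.natDegree_eq] at this
  lia

end HasMonicDegree

/-- `φ : R →+* A` and `g : A[X]` form the universal pair of an `R`-algebra together with a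
monic divisor of `f` of degree `m` over it. -/
structure IsUniversalDivisor {R A : Type u} [CommRing R] [CommRing A] (φ : R →+* A)
    (f : R[X]) (m : ℕ) (g : A[X]) : Prop where
  hasMonicDegree : g.HasMonicDegree m
  dvd : g ∣ f.map φ
  existsUnique_lift : ∀ (B : Type u) [CommRing B] (ψ : R →+* B) (h : B[X]),
    h.HasMonicDegree m → h ∣ f.map ψ → ∃! χ : A →+* B, χ.comp φ = ψ ∧ g.map χ = h

lemma _root_.AdjoinRoot.exists_map_of_eq_mul {R : Type*} [CommRing R] (f : R[X]) :
    ∃ f' : (AdjoinRoot f)[X], f.map (AdjoinRoot.of f) = (X - C (AdjoinRoot.root f)) * f' :=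
  dvd_iff_isRoot.mpr (by simp [IsRoot, eval_map])

namespace IsUniversalDivisor

variable {R A : Type u} [CommRing R] [CommRing A] {φ : R →+* A} {f : R[X]} {g : A[X]} {m q : ℕ}

lemma bijective_of_zero (h : IsUniversalDivisor φ f 0 g) : Function.Bijective φ := by
  have hg : g = 1 := by
    have := eq_C_of_natDegree_le_zero h.hasMonicDegree.1
    rw [this, h.hasMonicDegree.2, C_1]
  obtain ⟨χ, ⟨hχ, -⟩, -⟩ := h.existsUnique_lift R (.id R) 1 ⟨by simp, by simp⟩ (one_dvd _)
  have key : φ.comp χ = .id A :=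
    (h.existsUnique_lift A φ 1 ⟨by simp, by simp⟩ (one_dvd _)).unique
      ⟨by rw [RingHom.comp_assoc, hχ, RingHom.comp_id], by simp [hg]⟩ ⟨rfl, by simp [hg]⟩
  exact Function.bijective_iff_has_inverse.mpr
    ⟨χ, fun x ↦ congr($hχ x), fun x ↦ congr($key x)⟩

lemma eval₂_root (h : IsUniversalDivisor φ f m g) :
    f.eval₂ ((AdjoinRoot.of g).comp φ) (AdjoinRoot.root g) = 0 := by
  obtain ⟨c, hc⟩ := h.dvd
  rw [← eval₂_map, hc, eval₂_mul, AdjoinRoot.eval₂_root, zero_mul]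

/-- Adjoining a root of the universal divisor of degree `m + 1` of `f` gives the universal divisor
of degree `m` of `f / (X - x)`, where `x` is an adjoined root of `f`. -/
lemma adjoinRoot (h : IsUniversalDivisor φ f (m + 1) g)
    {f' : (AdjoinRoot f)[X]} (hf' : f.map (AdjoinRoot.of f) = (X - C (AdjoinRoot.root f)) * f')
    {g' : (AdjoinRoot g)[X]} (hg' : g.map (AdjoinRoot.of g) = (X - C (AdjoinRoot.root g)) * g') :
    IsUniversalDivisor (AdjoinRoot.lift ((AdjoinRoot.of g).comp φ) (AdjoinRoot.root g) h.eval₂_root)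
      f' m g' := by
  set φ' := AdjoinRoot.lift ((AdjoinRoot.of g).comp φ) (AdjoinRoot.root g) h.eval₂_root
  have hφ'of : φ'.comp (AdjoinRoot.of f) = (AdjoinRoot.of g).comp φ := AdjoinRoot.lift_comp_of _
  have hφ'root : φ' (.root f) = .root g := AdjoinRoot.lift_root _
  refine ⟨?_, ?_, ?_⟩
  · refine .of_mul_left (.X_sub_C (AdjoinRoot.root g)) (m := m) ?_
    rw [← hg', add_comm]
    exact h.hasMonicDegree.map _
  · obtain ⟨c, hc⟩ := h.dvd
    refine ⟨c.map (AdjoinRoot.of g), (monic_X_sub_C (AdjoinRoot.root g)).isRegular.left ?_⟩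
    have h1 := congr(Polynomial.map (AdjoinRoot.of g) $hc)
    have h2 := congr(Polynomial.map φ' $hf')
    rw [Polynomial.map_map, hφ'of] at h2
    rw [Polynomial.map_map, h2, Polynomial.map_mul, Polynomial.map_mul, hg'] at h1
    simpa [hφ'root, mul_assoc] using h1
  · intro B _ ψ p hp hpf
    set b := ψ (.root f)
    have hreg := (monic_X_sub_C b).isRegular.left
    have hfb : f.map (ψ.comp (AdjoinRoot.of f)) = (X - C b) * f'.map ψ := by
      rw [← Polynomial.map_map, hf']; simp [b]
    obtain ⟨χ, ⟨hχφ, hχg⟩, huniq⟩ := h.existsUnique_lift B (ψ.comp (AdjoinRoot.of f))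
      ((X - C b) * p)
      (by rw [add_comm]; exact .mul (.X_sub_C b) hp) (hfb ▸ mul_dvd_mul_left _ hpf)
    have hroot : g.eval₂ χ b = 0 := by rw [eval₂_eq_eval_map, hχg]; simp
    refine ⟨AdjoinRoot.lift χ b hroot, ⟨?_, ?_⟩, ?_⟩
    · refine AdjoinRoot.ringHom_ext ?_ ?_
      · rw [RingHom.comp_assoc, hφ'of, ← RingHom.comp_assoc, AdjoinRoot.lift_comp_of, hχφ]
      · rw [RingHom.comp_apply, hφ'root, AdjoinRoot.lift_root]
    · refine hreg ?_
      have := congr(Polynomial.map (AdjoinRoot.lift χ b hroot) $hg')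
      rw [Polynomial.map_map, AdjoinRoot.lift_comp_of, hχg] at this
      simpa using this.symm
    · rintro χ' ⟨h1, h2⟩
      have hb : χ' (.root g) = b := by rw [← hφ'root]; exact congr($h1 (.root f))
      refine AdjoinRoot.ringHom_ext ?_ (by rw [hb, AdjoinRoot.lift_root])
      rw [AdjoinRoot.lift_comp_of]
      refine huniq _ ⟨?_, ?_⟩
      · rw [RingHom.comp_assoc, ← hφ'of, ← RingHom.comp_assoc, h1]
      · rw [← Polynomial.map_map, hg']
        simp [hb, h2]

end IsUniversalDivisor

lemma HasMonicDegree.finrank_adjoinRoot (k : Type*) {A : Type*} [Field k] [CommRing A] [Algebra k A]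
    {g : A[X]} {m : ℕ} (hg : g.HasMonicDegree m) :
    Module.finrank k (AdjoinRoot g) = Module.finrank k A * m := by
  cases subsingleton_or_nontrivial A
  · have := Module.subsingleton A (AdjoinRoot g)
    simp [Module.finrank_zero_of_subsingleton]
  have := hg.monic.free_adjoinRoot
  rw [← Module.finrank_mul_finrank k A, (AdjoinRoot.powerBasis' hg.monic).finrank,
    AdjoinRoot.powerBasis'_dim, hg.natDegree_eq]

theorem IsUniversalDivisor.finite_and_finrank_eq {k : Type u} [Field k] (m : ℕ) :
    ∀ {R A : Type u} [CommRing R] [CommRing A] [Algebra k R] [Algebra k A] [FiniteDimensional k R]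
      (φ : R →ₐ[k] A) {f : R[X]} {g : A[X]} {q : ℕ}, f.HasMonicDegree q → m ≤ q →
      IsUniversalDivisor (φ : R →+* A) f m g →
      FiniteDimensional k A ∧ Module.finrank k A = Module.finrank k R * q.choose m := by
  induction m with
  | zero =>
    intro R A _ _ _ _ _ φ f g q hf hq h
    let e : R ≃ₗ[k] A := .ofBijective φ.toLinearMap h.bijective_of_zero
    exact ⟨Module.Finite.equiv e, by simp [e.finrank_eq]⟩
  | succ m ih =>
    intro R A _ _ _ _ _ φ f g q hf hq h
    obtain ⟨q, rfl⟩ : ∃ q', q = q' + 1 := ⟨q - 1, by lia⟩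
    obtain ⟨f', hf'⟩ := AdjoinRoot.exists_map_of_eq_mul f
    obtain ⟨g', hg'⟩ := AdjoinRoot.exists_map_of_eq_mul g
    have hf'q : f'.HasMonicDegree q := by
      refine .of_mul_left (.X_sub_C (AdjoinRoot.root f)) (m := q) ?_
      rw [← hf', add_comm]
      exact hf.map _
    have := hf.monic.finite_adjoinRoot
    have : Module.Finite k (AdjoinRoot f) := .trans R _
    let φ' : AdjoinRoot f →ₐ[k] AdjoinRoot g :=
      { AdjoinRoot.lift ((AdjoinRoot.of g).comp φ) (AdjoinRoot.root g) h.eval₂_root with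
        commutes' c := by
          simp only [RingHom.toMonoidHom_eq_coe, OneHom.toFun_eq_coe, MonoidHom.toOneHom_coe,
            MonoidHom.coe_coe]
          rw [IsScalarTower.algebraMap_apply k R (AdjoinRoot f), AdjoinRoot.algebraMap_eq,
            AdjoinRoot.lift_of, IsScalarTower.algebraMap_apply k A (AdjoinRoot g),
            AdjoinRoot.algebraMap_eq]
          simp }
    obtain ⟨hfin, hrank⟩ := ih φ' hf'q (by lia) (h.adjoinRoot hf' hg')
    rw [h.hasMonicDegree.finrank_adjoinRoot k, hf.finrank_adjoinRoot k] at hrank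
    have hinj : Function.Injective (algebraMap A (AdjoinRoot g)) := by
      cases subsingleton_or_nontrivial A
      · exact Function.injective_of_subsingleton _
      refine (injective_iff_map_eq_zero _).mpr fun a ha ↦ by_contra fun ha0 ↦ ?_
      refine h.hasMonicDegree.monic.not_dvd_of_natDegree_lt (C_ne_zero.mpr ha0) ?_
        (AdjoinRoot.mk_eq_zero.mp ha)
      rw [natDegree_C, h.hasMonicDegree.natDegree_eq]
      exact m.succ_pos
    refine ⟨.of_injective (IsScalarTower.toAlgHom k A (AdjoinRoot g)).toLinearMap hinj,
      Nat.eq_of_mul_eq_mul_right m.succ_pos ?_⟩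
    rw [hrank, mul_assoc, mul_assoc, Nat.add_one_mul_choose_eq]

end Polynomial

namespace MvPolynomial

variable (σ R : Type*) [Fintype σ] [CommRing R]

lemma hsymm_eq_sum_finsuppAntidiag [DecidableEq σ] (n : ℕ) :
    hsymm σ R n = ∑ l ∈ Finset.finsuppAntidiag Finset.univ n, ∏ i, X i ^ l i := by
  rw [hsymm]
  refine Finset.sum_bij' (fun s _ ↦ Multiset.toFinsupp s.1)
    (fun l hl ↦ ⟨Finsupp.toMultiset l, ?_⟩) ?_ ?_ ?_ ?_ ?_
  · simpa [Finsupp.card_toMultiset, Finsupp.sum_fintype] using hl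
  · intro s _
    have := Finsupp.card_toMultiset (Multiset.toFinsupp s.1)
    rw [Multiset.toFinsupp_toMultiset, s.2, Finsupp.sum_fintype _ _ (by simp)] at this
    exact Finset.mem_finsuppAntidiag.mpr ⟨this.symm, Finset.subset_univ _⟩
  · exact fun _ _ ↦ Finset.mem_univ _
  · intro s _
    ext; simp
  · simp
  · intro s _
    rw [Finset.prod_multiset_map_count]
    exact Finset.prod_subset (Finset.subset_univ _) (by simp +contextual)

lemma mk_hsymm_mul_prod [DecidableEq σ] :
    PowerSeries.mk (hsymm σ R) * ∏ i : σ, (1 - PowerSeries.C (X i) * PowerSeries.X) = 1 := by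
  have : PowerSeries.mk (hsymm σ R) =
      ∏ i : σ, PowerSeries.mk fun n ↦ (X i : MvPolynomial σ R) ^ n := by
    ext1 n
    simp [PowerSeries.coeff_prod, hsymm_eq_sum_finsuppAntidiag]
  rw [this, ← Finset.prod_mul_distrib]
  refine Finset.prod_eq_one fun i _ ↦ ?_
  ext1 n
  cases n <;> simp [mul_sub, ← mul_assoc, pow_succ, PowerSeries.coeff_one]

lemma prod_one_sub_C_X_mul_X :
    ∏ i : σ, (1 - Polynomial.C (X i) * Polynomial.X) =
      ∑ j ∈ Finset.range (Fintype.card σ + 1),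
        Polynomial.C ((-1) ^ j * esymm σ R j) * Polynomial.X ^ j := by
  simp_rw [sub_eq_add_neg, Finset.prod_one_add, Finset.sum_powerset, Finset.card_univ, esymm]
  refine Finset.sum_congr rfl fun j _ ↦ ?_
  simp_rw [Finset.mul_sum, map_sum, Finset.sum_mul]
  refine Finset.sum_congr rfl fun t ht ↦ ?_
  rw [← (Finset.mem_powersetCard.mp ht).2]
  simp_rw [neg_eq_neg_one_mul (Polynomial.C (X _ : MvPolynomial σ R) * Polynomial.X)]
  rw [Finset.prod_mul_distrib, Finset.prod_mul_distrib]
  simp [mul_assoc]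

variable (k : Type*) [Field k] (m : ℕ)

/-- The polynomial `∏ i, (1 - x i * T)` over the ring of symmetric polynomials. -/
noncomputable def esymmPoly : Polynomial (symmetricSubalgebra (Fin m) k) :=
  ∑ j ∈ Finset.range (m + 1),
    Polynomial.C ((-1) ^ j * ⟨esymm (Fin m) k j, esymm_isSymmetric (Fin m) k j⟩) * Polynomial.X ^ j

lemma coeff_esymmPoly (j : ℕ) : (esymmPoly k m).coeff j =
    (-1) ^ j * ⟨esymm (Fin m) k j, esymm_isSymmetric (Fin m) k j⟩ := by
  simp only [esymmPoly, Polynomial.finsetSum_coeff, Polynomial.coeff_C_mul_X_pow]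
  rw [Finset.sum_ite_eq]
  split_ifs with h
  · rfl
  · have : esymm (Fin m) k j = 0 := by
      rw [esymm, Finset.powersetCard_eq_empty.mpr (by simpa using h), Finset.sum_empty]
    exact (mul_eq_zero_of_right _ (Subtype.ext this)).symm

lemma natDegree_esymmPoly_le : (esymmPoly k m).natDegree ≤ m :=
  Polynomial.natDegree_sum_le_of_forall_le _ _ fun j hj ↦
    (Polynomial.natDegree_C_mul_X_pow_le _ _).trans (by simpa [Nat.lt_succ_iff] using hj)

/-- The generating series of the complete homogeneous symmetric polynomials. -/
noncomputable def hsymmSeries : PowerSeries (symmetricSubalgebra (Fin m) k) :=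
  PowerSeries.mk fun j ↦ ⟨hsymm (Fin m) k j, hsymm_isSymmetric (Fin m) k j⟩

lemma hsymmSeries_mul_esymmPoly : hsymmSeries k m * (esymmPoly k m : PowerSeries _) = 1 := by
  apply PowerSeries.map_injective (symmetricSubalgebra (Fin m) k).val.toRingHom
    Subtype.val_injective
  have h1 : PowerSeries.map (symmetricSubalgebra (Fin m) k).val.toRingHom (hsymmSeries k m) =
      PowerSeries.mk (hsymm (Fin m) k) := by
    ext1 n; simp [hsymmSeries]
  have h2 : (esymmPoly k m).map (symmetricSubalgebra (Fin m) k).val.toRingHom =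
      ∏ i, (1 - Polynomial.C (X i) * Polynomial.X) := by
    rw [prod_one_sub_C_X_mul_X, esymmPoly, Fintype.card_fin, Polynomial.map_sum]
    refine Finset.sum_congr rfl fun j _ ↦ ?_
    simp
  rw [map_mul, h1, ← Polynomial.polynomial_map_coe, h2, map_one, ← mk_hsymm_mul_prod]
  congr 1
  rw [← Polynomial.coeToPowerSeries.ringHom_apply, map_prod]
  simp

lemma hasMonicDegree_reflect_esymmPoly : ((esymmPoly k m).reflect m).HasMonicDegree m := by
  refine ⟨Polynomial.natDegree_reflect_le.trans (by simp [natDegree_esymmPoly_le]), ?_⟩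
  rw [Polynomial.coeff_reflect, Polynomial.revAt_le le_rfl, Nat.sub_self, coeff_esymmPoly]
  exact Subtype.ext (by simp)

variable {k m}

lemma ringHom_ext_of_map_esymmPoly {B : Type*} [CommRing B]
    {χ χ' : symmetricSubalgebra (Fin m) k →+* B}
    (hk : χ.comp (algebraMap k _) = χ'.comp (algebraMap k _))
    (hE : (esymmPoly k m).map χ = (esymmPoly k m).map χ') : χ = χ' := by
  let e := esymmAlgEquiv (σ := Fin m) k (n := m) (Fintype.card_fin m)
  have key : χ.comp (e : MvPolynomial (Fin m) k →+* symmetricSubalgebra (Fin m) k) =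
      χ'.comp (e : MvPolynomial (Fin m) k →+* symmetricSubalgebra (Fin m) k) := by
    refine MvPolynomial.ringHom_ext (fun r ↦ ?_) fun i ↦ ?_
    · have : e (C r) = algebraMap k _ r := e.commutes r
      simpa [this] using congr($hk r)
    · have h1 := congr(Polynomial.coeff $hE (i + 1))
      have h2 : e (X i) = ⟨esymm (Fin m) k (i + 1), esymm_isSymmetric _ _ _⟩ := by
        simp [e, esymmAlgEquiv, esymmAlgHom]
      rw [Polynomial.coeff_map, Polynomial.coeff_map, coeff_esymmPoly, ← h2] at h1
      have hu : IsUnit ((-1 : B) ^ (i + 1 : ℕ)) := isUnit_one.neg.pow _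
      exact hu.mul_left_cancel (by simpa using h1)
  ext x
  obtain ⟨y, rfl⟩ := e.surjective x
  exact congr($key y)

lemma exists_ringHom_map_reflect_esymmPoly {B : Type*} [CommRing B] (ψ : k →+* B)
    {p : Polynomial B} (hp : p.HasMonicDegree m) :
    ∃ χ : symmetricSubalgebra (Fin m) k →+* B,
      χ.comp (algebraMap k _) = ψ ∧ (esymmPoly k m).map χ = p.reflect m := by
  let e := esymmAlgEquiv (σ := Fin m) k (n := m) (Fintype.card_fin m)
  let χ := (eval₂Hom ψ fun i : Fin m ↦ (-1) ^ (i + 1 : ℕ) * p.coeff (m - (i + 1))).comp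
    (e.symm : symmetricSubalgebra (Fin m) k →+* MvPolynomial (Fin m) k)
  have hχ (x) : χ (e x) =
      eval₂ ψ (fun i : Fin m ↦ (-1) ^ (i + 1 : ℕ) * p.coeff (m - (i + 1))) x := by
    simp [χ]
  refine ⟨χ, ?_, ?_⟩
  · ext r
    have := hχ (C r)
    rwa [show e (C r) = algebraMap k _ r from e.commutes r, eval₂_C] at this
  · ext j
    obtain hj | hj := lt_or_ge m j
    · rw [Polynomial.coeff_map, Polynomial.coeff_eq_zero_of_natDegree_lt
        ((natDegree_esymmPoly_le k m).trans_lt hj), map_zero, Polynomial.coeff_reflect,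
        Polynomial.revAt_eq_self_of_lt hj, Polynomial.coeff_eq_zero_of_natDegree_lt
        (hp.natDegree_le.trans_lt hj)]
    rw [Polynomial.coeff_map, coeff_esymmPoly, Polynomial.coeff_reflect, Polynomial.revAt_le hj,
      map_mul, map_pow, map_neg, map_one]
    cases j with
    | zero =>
      rw [pow_zero, one_mul, Nat.sub_zero, hp.coeff_eq_one, ← map_one χ]
      exact congr(χ $(Subtype.ext (by simp)))
    | succ j =>
      have := hχ (X ⟨j, hj⟩)
      rw [show e (X ⟨j, hj⟩) = ⟨esymm (Fin m) k (j + 1), esymm_isSymmetric _ _ _⟩ by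
        simp [e, esymmAlgEquiv, esymmAlgHom], eval₂_X] at this
      rw [this, ← mul_assoc, ← mul_pow]
      simp

lemma map_hsymmSeries_eq {B : Type*} [CommRing B]
    (χ : symmetricSubalgebra (Fin m) k →+* B) {c : Polynomial B}
    (hc : (esymmPoly k m).map χ * c = 1) : PowerSeries.map χ (hsymmSeries k m) = c := by
  have h1 := congr(PowerSeries.map χ $(hsymmSeries_mul_esymmPoly k m))
  have h2 := congr(($hc : PowerSeries B))
  rw [map_mul, ← Polynomial.polynomial_map_coe, map_one] at h1
  rw [Polynomial.coe_mul, Polynomial.coe_one] at h2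
  exact left_inv_eq_right_inv h1 h2

theorem isUniversalDivisor_reflect_esymmPoly {k A : Type u} [Field k] [CommRing A] {m q : ℕ}
    (h : m ≤ q) {π : symmetricSubalgebra (Fin m) k →+* A} (hπ : Function.Surjective π)
    (hker : RingHom.ker π = hsymmIdeal k m q) :
    Polynomial.IsUniversalDivisor (π.comp (algebraMap k _)) (.X ^ q) m
      (((esymmPoly k m).reflect m).map π) := by
  refine ⟨(hasMonicDegree_reflect_esymmPoly k m).map _, ?_, fun B _ ψ p hp hpX ↦ ?_⟩
  · let c := PowerSeries.trunc (q - m + 1) (PowerSeries.map π (hsymmSeries k m))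
    have hcH : (c : PowerSeries _) = PowerSeries.map π (hsymmSeries k m) := by
      ext1 n
      rw [Polynomial.coeff_coe, PowerSeries.coeff_trunc]
      split_ifs with hn
      · rfl
      · symm
        rw [PowerSeries.coeff_map, ← RingHom.mem_ker, hker]
        exact Ideal.subset_span ⟨n, by lia, by simp [hsymmSeries]⟩
    have hc : (esymmPoly k m).map π * c = 1 := by
      apply Polynomial.coe_injective
      rw [Polynomial.coe_mul, hcH, Polynomial.polynomial_map_coe, ← map_mul, mul_comm,
        hsymmSeries_mul_esymmPoly, map_one, Polynomial.coe_one]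
    have hcdeg : c.natDegree ≤ q - m :=
      Nat.lt_succ_iff.mp (PowerSeries.natDegree_trunc_lt _ _)
    refine ⟨c.reflect (q - m), ?_⟩
    rw [← Polynomial.reflect_map, ← Polynomial.reflect_mul _ _
      (Polynomial.natDegree_map_le.trans (natDegree_esymmPoly_le k m)) hcdeg, hc,
      Polynomial.reflect_one, Nat.add_sub_cancel' h, Polynomial.map_pow, Polynomial.map_X]
  · obtain ⟨χ, hχk, hχ⟩ := exists_ringHom_map_reflect_esymmPoly ψ hp
    obtain ⟨c, hc⟩ := hpX
    rw [Polynomial.map_pow, Polynomial.map_X] at hc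
    have hcdeg : c.natDegree ≤ q - m := by
      refine (hp.of_mul_left (m := q - m) ?_).natDegree_le
      rw [← hc, Nat.add_sub_cancel' h]
      exact ⟨Polynomial.natDegree_X_pow_le q, by simp⟩
    have hχc : (esymmPoly k m).map χ * c.reflect (q - m) = 1 := by
      rw [hχ, ← Polynomial.reflect_mul _ _ hp.natDegree_le hcdeg, ← hc, Nat.add_sub_cancel' h,
        Polynomial.reflect_monomial, Polynomial.revAt_le le_rfl, Nat.sub_self, pow_zero]
    have hχker : RingHom.ker π ≤ RingHom.ker χ := by
      rw [hker, hsymmIdeal, Ideal.span_le]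
      rintro a ⟨j, hj, ha⟩
      have := congr(PowerSeries.coeff j $(map_hsymmSeries_eq χ hχc))
      rw [Polynomial.coeff_coe, Polynomial.coeff_eq_zero_of_natDegree_lt
        (Polynomial.natDegree_reflect_le.trans_lt (by simpa [hcdeg] using hj)),
        PowerSeries.coeff_map, hsymmSeries, PowerSeries.coeff_mk] at this
      rw [SetLike.mem_coe, RingHom.mem_ker, ← this]
      exact congr(χ $(Subtype.ext ha))
    obtain ⟨χ', rfl⟩ : ∃ χ' : A →+* B, χ'.comp π = χ :=
      ⟨π.liftOfSurjective hπ ⟨χ, hχker⟩, π.liftOfRightInverse_comp _ _ _⟩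
    refine ⟨χ', ⟨by rw [← RingHom.comp_assoc, hχk], ?_⟩, ?_⟩
    · rw [Polynomial.map_map, ← Polynomial.reflect_map, hχ, Polynomial.reflect_reflect]
    · rintro χ'' ⟨h1, h2⟩
      refine (RingHom.cancel_right hπ).mp (ringHom_ext_of_map_esymmPoly ?_ ?_)
      · rw [hχk, RingHom.comp_assoc, h1]
      · rw [hχ, ← h2, Polynomial.map_map, Polynomial.reflect_map, Polynomial.reflect_reflect]

/-- The dimension formula for any model `A` of the quotient by `hsymmIdeal k m q`. -/
theorem finite_and_finrank_of_eq_zero_iff_mem_hsymmIdeal {k A : Type u} [Field k]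
    [CommRing A] [Algebra k A] {m q : ℕ} (h : m ≤ q) (π : symmetricSubalgebra (Fin m) k →ₐ[k] A)
    (hπ : Function.Surjective π) (hker : ∀ x, π x = 0 ↔ x ∈ hsymmIdeal k m q) :
    FiniteDimensional k A ∧ Module.finrank k A = q.choose m := by
  have hof : (Algebra.ofId k A : k →+* A) =
      (π : symmetricSubalgebra (Fin m) k →+* A).comp (algebraMap k _) :=
    RingHom.ext fun r ↦ (π.commutes r).symm
  have := Polynomial.IsUniversalDivisor.finite_and_finrank_eq m (Algebra.ofId k A)
    ⟨Polynomial.natDegree_X_pow_le q, by simp⟩ h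
    (hof ▸ isUniversalDivisor_reflect_esymmPoly h hπ (Ideal.ext hker))
  rwa [Module.finrank_self, one_mul] at this

end MvPolynomial

/-- To compute the dimension of `S ⧸ I`, it suffices to do so for all models of the quotient. -/
lemma Ideal.Quotient.finite_and_finrank_eq_of_forall {k S : Type u} [Field k] [CommRing S]
    [Algebra k S] (I : Ideal S) (n : ℕ)
    (h : ∀ (A : Type u) [CommRing A] [Algebra k A] (π : S →ₐ[k] A), Function.Surjective π →
      (∀ x, π x = 0 ↔ x ∈ I) → FiniteDimensional k A ∧ Module.finrank k A = n) :
    FiniteDimensional k (S ⧸ I) ∧ Module.finrank k (S ⧸ I) = n :=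
  h _ (Ideal.Quotient.mkₐ k I) Ideal.Quotient.mk_surjective fun _ ↦ Ideal.Quotient.eq_zero_iff_mem

set_option synthInstance.maxHeartbeats 1000000 in
theorem symmetric_quotient_finrank_choose (k : Type*) [Field k] (m q : ℕ) (h : m ≤ q) :
    FiniteDimensional k (symmetricSubalgebra (Fin m) k ⧸ hsymmIdeal k m q) ∧
      Module.finrank k (symmetricSubalgebra (Fin m) k ⧸ hsymmIdeal k m q) = Nat.choose q m := by
  exact Ideal.Quotient.finite_and_finrank_eq_of_forall _ _ fun _ _ _ _ ↦
    finite_and_finrank_of_eq_zero_iff_mem_hsymmIdeal h _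
end

section
/- Let k be a field of characteristic different from 2, A = k[x,y]/(x², y²), and M = A/(x + y). Then dim_k Tor_0^A(M, M) = 2 and dim_k Tor_i^A(M, M) = 1 for every i ≥ 1. -/
/-!
STATEMENT 15: Let `k` be a field with `char k ≠ 2`, `A = k[x,y]/(x², y²)` and
`M = A/(x + y)`.  Then `dim_k Tor_0^A(M, M) = 2` and `dim_k Tor_i^A(M, M) = 1` for all
`i ≥ 1`.
-/

open CategoryTheory MvPolynomial

/-- The ring `A = k[x,y]/(x², y²)`. -/
noncomputable abbrev squareZeroAlg (k : Type*) [Field k] :=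
  MvPolynomial (Fin 2) k ⧸
    (Ideal.span {(X 0 : MvPolynomial (Fin 2) k) ^ 2, (X 1 : MvPolynomial (Fin 2) k) ^ 2})

/-- The module `M = A/(x + y)` over `A = k[x,y]/(x², y²)`. -/
noncomputable abbrev antiDiagonalQuot (k : Type*) [Field k] :=
  squareZeroAlg k ⧸
    (Ideal.span {Ideal.Quotient.mk _ ((X 0 : MvPolynomial (Fin 2) k))
      + Ideal.Quotient.mk _ ((X 1 : MvPolynomial (Fin 2) k))} :
        Ideal (squareZeroAlg k))

namespace PeriodicResolution
open MonoidalCategory Limits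
universe u
variable {R : Type u} [CommRing R] {a b : R}

/-- The periodic chain complex `⋯ ⟶ N --a--> N --b--> N --a--> N ⟶ 0`, for `a * b = 0`. -/
noncomputable abbrev complex (hab : a * b = 0) (N : ModuleCat.{u} R) :
    ChainComplex (ModuleCat.{u} R) ℕ :=
  HomologicalComplex.alternatingConst N (φ := b • 𝟙 N) (ψ := a • 𝟙 N)
    (by simp [smul_smul, hab]) (by simp [smul_smul, mul_comm b a, hab])
    fun _ _ => ComplexShape.down_nat_odd_add

/-- The augmentation of the periodic complex on `R` to `R ⧸ (a)`. -/
noncomputable def augmentation (hab : a * b = 0) :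
    complex hab (ModuleCat.of R R) ⟶
      (ChainComplex.single₀ (ModuleCat.{u} R)).obj (ModuleCat.of R (R ⧸ Ideal.span {a})) :=
  ((complex hab (ModuleCat.of R R)).toSingle₀Equiv _).symm
    ⟨ModuleCat.ofHom (Ideal.span {a}).mkQ, by
      ext
      exact (Submodule.Quotient.mk_eq_zero (Ideal.span {a})).2
        ((Ideal.span {a}).mul_mem_right 1 (Ideal.mem_span_singleton_self a))⟩

lemma quasiIso_augmentation (hab : a * b = 0) (ha : ∀ r, a * r = 0 → b ∣ r)
    (hb : ∀ r, b * r = 0 → a ∣ r) : QuasiIso (augmentation hab) where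
  quasiIsoAt m := by
    induction m with
    | zero =>
      simp only [augmentation]
      rw [ChainComplex.quasiIsoAt₀_iff, ShortComplex.quasiIso_iff_of_zeros' _ rfl rfl rfl]
      constructor
      · rw [ShortComplex.moduleCat_exact_iff]
        intro x hx
        have hx' : (Ideal.span {a}).mkQ x = 0 := by
          simpa [ChainComplex.toSingle₀Equiv] using! hx
        obtain ⟨y, hy⟩ := Ideal.mem_span_singleton.1 ((Submodule.Quotient.mk_eq_zero _).1 hx')
        exact ⟨y, by simpa [HomologicalComplex.alternatingConst] using! hy.symm⟩
      · rw [ModuleCat.epi_iff_surjective]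
        simpa [ChainComplex.toSingle₀Equiv] using! (Ideal.span {a}).mkQ_surjective
    | succ m _ =>
      rw [quasiIsoAt_iff_exactAt' (hL := ChainComplex.exactAt_succ_single_obj ..),
          HomologicalComplex.exactAt_iff' _ (m + 2) (m + 1) m (by simp) (by simp),
          ShortComplex.moduleCat_exact_iff]
      intro x hx
      by_cases hm : Even m
      · obtain ⟨y, hy⟩ := ha x (by simpa [Nat.even_add_one, hm] using! hx)
        exact ⟨y, by simpa [Nat.even_add_one, hm] using! hy.symm⟩
      · obtain ⟨y, hy⟩ := hb x (by simpa [Nat.even_add_one, hm] using! hx)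
        exact ⟨y, by simpa [Nat.even_add_one, hm] using! hy.symm⟩

/-- If `a` and `b` generate each other's annihilators, `R ⧸ (a)` has a projective resolution by the
periodic complex on `R`. -/
noncomputable def resolution (hab : a * b = 0) (ha : ∀ r, a * r = 0 → b ∣ r)
    (hb : ∀ r, b * r = 0 → a ∣ r) :
    ProjectiveResolution (ModuleCat.of R (R ⧸ Ideal.span {a})) where
  complex := complex hab (ModuleCat.of R R)
  projective _ := inferInstanceAs (Projective (ModuleCat.of R R))
  π := augmentation hab
  quasiIso := quasiIso_augmentation hab ha hb

/-- Tensoring the periodic complex on `R` with `N` gives the periodic complex on `N`. -/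
noncomputable def tensorIso (hab : a * b = 0) (N : ModuleCat.{u} R) :
    ((((tensoringLeft (ModuleCat.{u} R)).obj N).mapHomologicalComplex _).obj
      (complex hab (ModuleCat.of R R))) ≅ complex hab N :=
  HomologicalComplex.Hom.isoOfComponents (fun _ => ρ_ N) fun i j h => by
    subst h
    have hmap (r : R) : (ρ_ N).hom ≫ (r • 𝟙 N) = ((tensoringLeft (ModuleCat.{u} R)).obj N).map
        (r • 𝟙 (ModuleCat.of R R)) ≫ (ρ_ N).hom :=
      (by simp : _ = (N ◁ (r • 𝟙 (𝟙_ (ModuleCat.{u} R)))) ≫ (ρ_ N).hom)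
    by_cases hj : Even (j + 1)
    · simp [hj]
      exact hmap b
    · simp [hj]
      exact hmap a

/-- `Tor` against `R ⧸ (a)` is the homology of the periodic complex. -/
noncomputable def torIso (hab : a * b = 0) (ha : ∀ r, a * r = 0 → b ∣ r)
    (hb : ∀ r, b * r = 0 → a ∣ r) (N : ModuleCat.{u} R) (n : ℕ) :
    ((Tor (ModuleCat.{u} R) n).obj N).obj (ModuleCat.of R (R ⧸ Ideal.span {a})) ≅
      (complex hab N).homology n :=
  (resolution hab ha hb).isoLeftDerivedObj _ n ≪≫
    HomologicalComplex.homologyMapIso (tensorIso hab N) n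

/-- When `a` annihilates `N`, the odd `Tor` groups are cokernels of multiplication by `b`. -/
noncomputable def torIsoOdd (hab : a * b = 0) (ha : ∀ r, a * r = 0 → b ∣ r)
    (hb : ∀ r, b * r = 0 → a ∣ r) (N : ModuleCat.{u} R) (haN : ∀ m : N, a • m = 0)
    {n : ℕ} (hn : Odd n) :
    ((Tor (ModuleCat.{u} R) n).obj N).obj (ModuleCat.of R (R ⧸ Ideal.span {a})) ≅
      ModuleCat.of R (N ⧸ LinearMap.range (LinearMap.lsmul R N b)) :=
  torIso hab ha hb N n ≪≫
  HomologicalComplex.alternatingConstHomologyIsoOdd N _ _ _ (by simp)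
    (by rcases hn with ⟨j, rfl⟩; simp) hn ≪≫
  (ShortComplex.LeftHomologyData.ofIsColimitCokernelCofork _
    (ModuleCat.hom_ext (LinearMap.ext haN)) _
    (ModuleCat.cokernelIsColimit _)).homologyIso

/-- When `a` annihilates `N`, the positive even `Tor` groups are kernels of multiplication by `b`. -/
noncomputable def torIsoEven (hab : a * b = 0) (ha : ∀ r, a * r = 0 → b ∣ r)
    (hb : ∀ r, b * r = 0 → a ∣ r) (N : ModuleCat.{u} R) (haN : ∀ m : N, a • m = 0)
    {n : ℕ} (hn : Even n) (h0 : n ≠ 0) :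
    ((Tor (ModuleCat.{u} R) n).obj N).obj (ModuleCat.of R (R ⧸ Ideal.span {a})) ≅
      ModuleCat.of R (LinearMap.ker (LinearMap.lsmul R N b)) :=
  torIso hab ha hb N n ≪≫
  HomologicalComplex.alternatingConstHomologyIsoEven N _ _ _ (by simp)
    (by obtain ⟨m, rfl⟩ := Nat.exists_eq_succ_of_ne_zero h0; simp) hn ≪≫
  (ShortComplex.LeftHomologyData.ofIsLimitKernelFork _
    (ModuleCat.hom_ext (LinearMap.ext haN)) _
    (ModuleCat.kernelIsLimit _)).homologyIso

/-- When `a` annihilates `N`, the degree zero `Tor` group is `N`. -/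
noncomputable def torIsoZero (a : R) (N : ModuleCat.{u} R) (haN : ∀ m : N, a • m = 0) :
    ((Tor (ModuleCat.{u} R) 0).obj N).obj (ModuleCat.of R (R ⧸ Ideal.span {a})) ≅ N :=
  have : PreservesFiniteColimits ((tensoringLeft (ModuleCat.{u} R)).obj N) :=
    inferInstanceAs (PreservesFiniteColimits (tensorLeft N))
  have hbot : (Ideal.span {a} • ⊤ : Submodule R N) = ⊥ := by
    rw [Submodule.ideal_span_singleton_smul, eq_bot_iff]
    rintro _ ⟨m, -, rfl⟩
    exact haN m
  ((tensoringLeft (ModuleCat.{u} R)).obj N).leftDerivedZeroIsoSelf.app _ ≪≫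
    (TensorProduct.tensorQuotEquivQuotSMul N (Ideal.span {a}) ≪≫ₗ
      Submodule.quotEquivOfEqBot _ hbot).toModuleIso

end PeriodicResolution

namespace squareZeroAlg
variable {k : Type*} [Field k]

/-- The class of the variable `x` in `k[x,y]/(x², y²)`. -/
noncomputable abbrev x : squareZeroAlg k := Ideal.Quotient.mk _ (X 0)

/-- The class of the variable `y` in `k[x,y]/(x², y²)`. -/
noncomputable abbrev y : squareZeroAlg k := Ideal.Quotient.mk _ (X 1)

lemma x_mul_x : (x : squareZeroAlg k) * x = 0 := by
  rw [← map_mul, ← sq, Ideal.Quotient.eq_zero_iff_mem]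
  exact Ideal.subset_span (by simp)

lemma y_mul_y : (y : squareZeroAlg k) * y = 0 := by
  rw [← map_mul, ← sq, Ideal.Quotient.eq_zero_iff_mem]
  exact Ideal.subset_span (by simp)

lemma x_add_y_mul_x_sub_y : (x + y : squareZeroAlg k) * (x - y) = 0 := by
  linear_combination x_mul_x (k := k) - y_mul_y (k := k)

lemma exists_eq_combination (r : squareZeroAlg k) : ∃ a b c d : k, r = algebraMap k _ a +
    algebraMap k _ b * x + algebraMap k _ c * y + algebraMap k _ d * (x * y) := by
  obtain ⟨p, rfl⟩ := Ideal.Quotient.mk_surjective r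
  induction p using MvPolynomial.induction_on with
  | C a => exact ⟨a, 0, 0, 0, by simp; rfl⟩
  | add p q hp hq =>
    obtain ⟨a, b, c, d, hp⟩ := hp
    obtain ⟨a', b', c', d', hq⟩ := hq
    refine ⟨a + a', b + b', c + c', d + d', ?_⟩
    rw [map_add, hp, hq]
    simp only [map_add]
    ring
  | mul_X p i hp =>
    obtain ⟨a, b, c, d, hp⟩ := hp
    rw [map_mul, hp]
    fin_cases i
    · refine ⟨0, a, 0, c, ?_⟩
      simp only [Fin.zero_eta, map_zero]
      linear_combination (algebraMap k (squareZeroAlg k) b + algebraMap k _ d * y) * x_mul_x (k := k)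
    · refine ⟨0, 0, a, b, ?_⟩
      simp only [Fin.mk_one, map_zero]
      linear_combination (algebraMap k (squareZeroAlg k) c + algebraMap k _ d * x) * y_mul_y (k := k)

/-- The algebra map out of `k[x,y]/(x², y²)` sending `x` and `y` to square-zero elements. -/
noncomputable def lift {B : Type*} [CommRing B] [Algebra k B] (u v : B) (hu : u * u = 0)
    (hv : v * v = 0) : squareZeroAlg k →ₐ[k] B :=
  Ideal.Quotient.liftₐ _ (aeval ![u, v]) fun p hp => by
    have h : Ideal.span {(X 0 : MvPolynomial (Fin 2) k) ^ 2, X 1 ^ 2} ≤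
        RingHom.ker (aeval (R := k) ![u, v]) := by
      rw [Ideal.span_le]
      rintro _ (rfl | rfl) <;> simp [RingHom.mem_ker, sq, hu, hv]
    exact h hp

section
variable {B : Type*} [CommRing B] [Algebra k B] (u v : B) (hu : u * u = 0) (hv : v * v = 0)

@[simp] lemma lift_x : lift (k := k) u v hu hv x = u :=
  (aeval_X ![u, v] 0 : aeval (R := k) ![u, v] (X 0) = u)

@[simp] lemma lift_y : lift (k := k) u v hu hv y = v :=
  (aeval_X ![u, v] 1 : aeval (R := k) ![u, v] (X 1) = v)
end

open DualNumber in
lemma eq_zero_of_combination_eq_zero {a b c d : k} (h : algebraMap k (squareZeroAlg k) a +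
    algebraMap k _ b * x + algebraMap k _ c * y + algebraMap k _ d * (x * y) = 0) :
    a = 0 ∧ b = 0 ∧ c = 0 ∧ d = 0 := by
  have h' := congrArg (lift (k := k) (B := (k[ε])[ε]) (TrivSqZeroExt.inl ε) ε
    (by rw [← TrivSqZeroExt.inl_mul]; simp) (by simp)) h
  simp only [map_add, map_mul, AlgHom.commutes, lift_x, lift_y, map_zero] at h'
  simpa [TrivSqZeroExt.ext_iff, TrivSqZeroExt.algebraMap_eq_inl', and_assoc, and_left_comm] using h'

lemma x_sub_y_dvd {r : squareZeroAlg k} (h : (x + y) * r = 0) : x - y ∣ r := by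
  obtain ⟨a, b, c, d, rfl⟩ := exists_eq_combination r
  obtain ⟨-, ha, -, hbc⟩ := eq_zero_of_combination_eq_zero
    (a := 0) (b := a) (c := a) (d := b + c) (by
      simp only [map_zero, map_add]
      linear_combination h - (algebraMap k _ b + algebraMap k _ d * y) * x_mul_x (k := k)
        - (algebraMap k _ c + algebraMap k _ d * x) * y_mul_y (k := k))
  obtain rfl : c = -b := by linear_combination hbc
  refine ⟨algebraMap k _ b + algebraMap k _ d * y, ?_⟩
  simp only [ha, map_zero, map_neg]
  linear_combination algebraMap k (squareZeroAlg k) d * y_mul_y (k := k)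

lemma x_add_y_dvd {r : squareZeroAlg k} (h : (x - y) * r = 0) : x + y ∣ r := by
  obtain ⟨a, b, c, d, rfl⟩ := exists_eq_combination r
  obtain ⟨-, ha, -, hbc⟩ := eq_zero_of_combination_eq_zero
    (a := 0) (b := a) (c := -a) (d := c - b) (by
      simp only [map_zero, map_sub, map_neg]
      linear_combination h - (algebraMap k _ b + algebraMap k _ d * y) * x_mul_x (k := k)
        + (algebraMap k _ c + algebraMap k _ d * x) * y_mul_y (k := k))
  obtain rfl : c = b := by linear_combination hbc
  refine ⟨algebraMap k _ c + algebraMap k _ d * y, ?_⟩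
  simp only [ha, map_zero]
  linear_combination -algebraMap k (squareZeroAlg k) d * y_mul_y (k := k)

end squareZeroAlg

namespace antiDiagonalQuot
open squareZeroAlg DualNumber
variable {k : Type*} [Field k]

noncomputable local instance : CommRing (antiDiagonalQuot k) := Ideal.Quotient.commRing _

noncomputable local instance : Semiring (antiDiagonalQuot k) := CommSemiring.toSemiring

/-- The projection of `k[x,y]/(x², y²)` onto `k[x,y]/(x², y², x + y)`. -/
noncomputable abbrev proj : squareZeroAlg k →ₐ[k] antiDiagonalQuot k :=
  Ideal.Quotient.mkₐ k _

lemma smul_eq_proj_mul (r : squareZeroAlg k) (m : antiDiagonalQuot k) : r • m = proj r * m := by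
  obtain ⟨s, rfl⟩ := Ideal.Quotient.mk_surjective m
  rfl

/-- The class of `x` in `k[x,y]/(x², y², x + y)`. -/
noncomputable abbrev xbar : antiDiagonalQuot k := proj x

lemma proj_x_add_y : proj (x + y : squareZeroAlg k) = 0 :=
  Ideal.Quotient.eq_zero_iff_mem.2 (Ideal.mem_span_singleton_self _)

lemma proj_y : proj (y : squareZeroAlg k) = -xbar := by
  linear_combination (map_add (proj (k := k)) x y).symm.trans (proj_x_add_y (k := k))

lemma xbar_mul_xbar : (xbar : antiDiagonalQuot k) * xbar = 0 := by
  rw [← map_mul, x_mul_x, map_zero]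

lemma exists_eq_add_smul (m : antiDiagonalQuot k) : ∃ a b : k,
    m = algebraMap k (antiDiagonalQuot k) a + b • (xbar : antiDiagonalQuot k) := by
  obtain ⟨r, rfl⟩ := Ideal.Quotient.mkₐ_surjective k _ m
  obtain ⟨a, b, c, d, rfl⟩ := exists_eq_combination r
  refine ⟨a, b - c, ?_⟩
  simp only [map_add, map_mul, proj_y, AlgHom.commutes, Algebra.smul_def, map_sub]
  linear_combination -algebraMap k (antiDiagonalQuot k) d * xbar_mul_xbar (k := k)

/-- The algebra map from `k[x,y]/(x², y², x + y)` to the dual numbers with `x ↦ ε`, `y ↦ -ε`. -/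
noncomputable def toDualNumber : antiDiagonalQuot k →ₐ[k] k[ε] :=
  Ideal.Quotient.liftₐ _ (squareZeroAlg.lift ε (-ε) (by simp) (by simp)) fun p hp => by
    obtain ⟨q, rfl⟩ := Ideal.mem_span_singleton.1 hp
    simp

@[simp] lemma toDualNumber_xbar : toDualNumber (k := k) xbar = ε :=
  squareZeroAlg.lift_x ε (-ε) (by simp) (by simp)

lemma toDualNumber_bijective : Function.Bijective (toDualNumber (k := k)) := by
  refine ⟨(injective_iff_map_eq_zero _).2 fun m hm => ?_, fun t => ?_⟩
  · obtain ⟨a, b, rfl⟩ := exists_eq_add_smul m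
    obtain ⟨rfl, rfl⟩ : a = 0 ∧ b = 0 := by
      simpa [TrivSqZeroExt.ext_iff, TrivSqZeroExt.algebraMap_eq_inl'] using hm
    simp
  · exact ⟨algebraMap k _ t.fst + t.snd • xbar, by
      rw [map_add, map_smul, AlgHom.commutes, toDualNumber_xbar]
      ext <;> simp [TrivSqZeroExt.algebraMap_eq_inl']⟩

lemma finrank_eq_two : Module.finrank k (antiDiagonalQuot k) = 2 := by
  rw [(LinearEquiv.ofBijective toDualNumber.toLinearMap toDualNumber_bijective).finrank_eq]
  exact (Module.finrank_prod (R := k) (M := k) (M' := k)).trans (by simp)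

instance : FiniteDimensional k (antiDiagonalQuot k) :=
  .of_finrank_pos (by simp [finrank_eq_two])

lemma x_sub_y_smul (a b : k) :
    (x - y : squareZeroAlg k) •
        (algebraMap k (antiDiagonalQuot k) a + b • (xbar : antiDiagonalQuot k)) =
      (2 * a) • (xbar : antiDiagonalQuot k) := by
  simp only [smul_eq_proj_mul, map_sub, proj_y, Algebra.smul_def, map_mul, map_ofNat]
  linear_combination 2 * algebraMap k (antiDiagonalQuot k) b * xbar_mul_xbar (k := k)

/-- Multiplication by `x - y` on `k[x,y]/(x², y², x + y)`. -/
noncomputable abbrev mulXSubY : antiDiagonalQuot k →ₗ[squareZeroAlg k] antiDiagonalQuot k :=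
  LinearMap.lsmul _ _ (x - y)

lemma xbar_ne_zero : (xbar : antiDiagonalQuot k) ≠ 0 := fun h => by
  simpa [TrivSqZeroExt.ext_iff] using congrArg toDualNumber h

lemma finrank_ker (h2 : (2 : k) ≠ 0) :
    Module.finrank k (LinearMap.ker (mulXSubY (k := k))) = 1 := by
  have hx : xbar ∈ LinearMap.ker (mulXSubY (k := k)) := by
    have h := x_sub_y_smul (k := k) 0 1
    rw [map_zero, zero_add, one_smul, mul_zero, zero_smul] at h
    exact h
  refine finrank_eq_one_iff'.2 ⟨⟨xbar, hx⟩, fun h => xbar_ne_zero (congrArg Subtype.val h), ?_⟩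
  rintro ⟨m, hm⟩
  obtain ⟨a, b, rfl⟩ := exists_eq_add_smul m
  have ha : a = 0 := by
    simpa [h2, xbar_ne_zero] using (x_sub_y_smul a b).symm.trans hm
  exact ⟨b, Subtype.ext (by simp [ha])⟩

lemma finrank_quotient_range (h2 : (2 : k) ≠ 0) :
    Module.finrank k (antiDiagonalQuot k ⧸ LinearMap.range (mulXSubY (k := k))) = 1 := by
  have h₁ := ((mulXSubY (k := k)).restrictScalars k).finrank_range_add_finrank_ker
  have h₂ := ((LinearMap.range (mulXSubY (k := k))).restrictScalars k).finrank_quotient_add_finrank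
  have h₃ := finrank_ker h2
  rw [finrank_eq_two] at h₁ h₂
  change Module.finrank k (LinearMap.range (mulXSubY (k := k))) +
    Module.finrank k (LinearMap.ker (mulXSubY (k := k))) = 2 at h₁
  change Module.finrank k (antiDiagonalQuot k ⧸ LinearMap.range (mulXSubY (k := k))) +
    Module.finrank k (LinearMap.range (mulXSubY (k := k))) = 2 at h₂
  lia

lemma x_add_y_smul (m : antiDiagonalQuot k) : (x + y : squareZeroAlg k) • m = 0 := by
  rw [smul_eq_proj_mul]
  exact (congrArg (· * m) proj_x_add_y).trans (zero_mul m)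

end antiDiagonalQuot

/-- The dimension of a module over a `k`-algebra, computed through restriction of scalars. -/
lemma ModuleCat.finrank_restrictScalars_obj {k A : Type*} [Field k] [CommRing A] [Algebra k A]
    {P : Type*} [AddCommGroup P] [Module A P] [Module k P] [IsScalarTower k A P]
    {N : ModuleCat A} (e : N ≅ ModuleCat.of A P) :
    Module.finrank k ((ModuleCat.restrictScalars (algebraMap k A)).obj N) = Module.finrank k P :=
  LinearEquiv.finrank_eq
    { e.toLinearEquiv.toAddEquiv with
      map_smul' c n := (e.toLinearEquiv.map_smul (algebraMap k A c) n).trans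
        (algebraMap_smul A c _) }

theorem tor_squareZero_antiDiagonal (k : Type) [Field k] (h2 : (2 : k) ≠ 0) :
    Module.finrank k
        ((ModuleCat.restrictScalars (algebraMap k (squareZeroAlg k))).obj
          (((Tor (ModuleCat (squareZeroAlg k)) 0).obj
              (ModuleCat.of (squareZeroAlg k) (antiDiagonalQuot k))).obj
            (ModuleCat.of (squareZeroAlg k) (antiDiagonalQuot k)))) = 2 ∧
      ∀ i : ℕ, 1 ≤ i →
        Module.finrank k
          ((ModuleCat.restrictScalars (algebraMap k (squareZeroAlg k))).obj
            (((Tor (ModuleCat (squareZeroAlg k)) i).obj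
                (ModuleCat.of (squareZeroAlg k) (antiDiagonalQuot k))).obj
              (ModuleCat.of (squareZeroAlg k) (antiDiagonalQuot k)))) = 1 := by
  have ha (r : squareZeroAlg k) : (squareZeroAlg.x + squareZeroAlg.y) * r = 0 → _ :=
    squareZeroAlg.x_sub_y_dvd
  have hb (r : squareZeroAlg k) : (squareZeroAlg.x - squareZeroAlg.y) * r = 0 → _ :=
    squareZeroAlg.x_add_y_dvd
  have hab := squareZeroAlg.x_add_y_mul_x_sub_y (k := k)
  have haN := antiDiagonalQuot.x_add_y_smul (k := k)
  refine ⟨?_, fun i hi => ?_⟩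
  · exact (ModuleCat.finrank_restrictScalars_obj
      (PeriodicResolution.torIsoZero _ (ModuleCat.of _ (antiDiagonalQuot k)) haN)).trans
      antiDiagonalQuot.finrank_eq_two
  · rcases i.even_or_odd with hi' | hi'
    · exact (ModuleCat.finrank_restrictScalars_obj (PeriodicResolution.torIsoEven hab ha hb
        (ModuleCat.of _ (antiDiagonalQuot k)) haN hi' (by lia))).trans
        (antiDiagonalQuot.finrank_ker h2)
    · exact (ModuleCat.finrank_restrictScalars_obj (PeriodicResolution.torIsoOdd hab ha hb
        (ModuleCat.of _ (antiDiagonalQuot k)) haN hi')).trans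
        (antiDiagonalQuot.finrank_quotient_range h2)
end
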